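/- Let n be a positive integer, 0 < α < n, and p ≤ (n+α)/(n−α). Suppose u is a positive function on ℝⁿ, continuous on ℝⁿ \ {x⁰}, unbounded in every neighborhood of x⁰, and satisfying u(x) = ∫_{ℝⁿ} |x−y|^{−(n−α)} u(y)^p dy for all x ≠ x⁰. Then u is radially symmetric about x⁰; that is, u(x) depends only on |x − x⁰|. -/

import Mathlib

open MeasureTheory

/-!
The proof is by the method of moving spheres. Let `γ = n - α` be the exponent of the kernel. When
`p > 0`, `u` lies below its Kelvin transform inside every sphere not enclosing `x⁰`. For small
spheres the set where this fails has small measure, on which the Riesz kernel contracts, so it is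
empty; the singularity makes the inequality strict, so the sphere can be enlarged as long as it
does not reach `x⁰`. Given `|x₁ - x⁰| = |x₂ - x⁰|` and `q > 1`, one such sphere carries `x₁` to
`x₂` with conformal factor `q`, so that `u x₁ ≤ q ^ γ * u x₂`; then let `q → 1`. When `p ≤ 0`
there is no solution: over large balls the average of `u` stays bounded while that of `u ^ p`
tends to `0`, although `u ^ p` is bounded below wherever `u` is bounded above.
-/

section SingularSolutions

open Metric Set Filter Topology EuclideanGeometry Module

section RieszKernel

variable {E : Type*} [NormedAddCommGroup E] [NormedSpace ℝ E] [FiniteDimensional ℝ E]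
  [Nontrivial E] [MeasurableSpace E] [BorelSpace E] (μ : Measure E) [μ.IsAddHaarMeasure] {γ : ℝ}

lemma integrableOn_ball_dist_rpow_neg (hγd : γ < finrank ℝ E) (a y : E) (R : ℝ) :
    IntegrableOn (fun x => dist x y ^ (-γ)) (ball a R) μ := by
  have hcentered : IntegrableOn (fun x : E => ‖x‖ ^ (-γ)) (ball 0 (R + dist a y)) μ := by
    refine integrableOn_ball_of_norm_le_rpow (C := 1) finrank_pos hγd ?_
      (measurable_norm.pow_const _).aestronglyMeasurable
    filter_upwards with x
    rw [one_mul, Real.norm_of_nonneg (by positivity)]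
  have htranslated := ((measurePreserving_sub_right μ y).integrableOn_comp_preimage
    (Homeomorph.subRight y).measurableEmbedding).2 hcentered
  refine (htranslated.congr_fun (fun x _ => ?_)
    ((measurable_id.sub_const y) measurableSet_ball)).mono_set fun x hx => ?_
  · simp [dist_eq_norm]
  · rw [mem_preimage, mem_ball_zero_iff, ← dist_eq_norm]
    linarith [dist_triangle x a y, mem_ball.1 hx]

omit [Nontrivial E] in
lemma setIntegral_ball_dist_rpow_neg (y : E) {R : ℝ} (hR : 0 < R) :
    ∫ x in ball y R, dist x y ^ (-γ) ∂μ =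
      R ^ (finrank ℝ E - γ) * ∫ x in ball (0 : E) 1, ‖x‖ ^ (-γ) ∂μ := by
  have hpreimage : (fun x => x - y) ⁻¹' ball 0 R = ball y R := by
    ext x; simp [dist_eq_norm]
  have htranslate := (measurePreserving_sub_right μ y).setIntegral_preimage_emb
    (Homeomorph.subRight y).measurableEmbedding (fun x => ‖x‖ ^ (-γ)) (ball 0 R)
  have hscale := Measure.setIntegral_comp_smul_of_pos μ
    (fun x : E => ‖x‖ ^ (-γ)) (ball 0 1) hR
  simp_rw [smul_unitBall_of_pos hR, norm_smul, Real.norm_of_nonneg hR.le,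
    Real.mul_rpow hR.le (norm_nonneg _), integral_const_mul, smul_eq_mul] at hscale
  simp_rw [hpreimage, ← dist_eq_norm] at htranslate
  rw [htranslate, sub_eq_add_neg, Real.rpow_add hR, Real.rpow_natCast, mul_assoc, hscale,
    mul_inv_cancel_left₀ (by positivity)]

omit [Nontrivial E] [BorelSpace E] in
lemma setIntegral_ball_dist_rpow_neg_le_of_two_mul_le (hγ0 : 0 ≤ γ) {a y : E} {R : ℝ}
    (hR : 0 < R) (hay : 2 * R ≤ dist a y) :
    ∫ x in ball a R, dist x y ^ (-γ) ∂μ ≤ 2 ^ γ * μ.real (ball a R) * dist a y ^ (-γ) := by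
  have hbound : ∀ x ∈ ball a R, ‖dist x y ^ (-γ)‖ ≤ (dist a y / 2) ^ (-γ) := by
    intro x hx
    rw [Real.norm_of_nonneg (by positivity)]
    refine Real.rpow_le_rpow_of_nonpos (by linarith) ?_ (by linarith)
    linarith [dist_triangle_left a y x, mem_ball.1 hx]
  have := (le_abs_self _).trans (norm_setIntegral_le_of_norm_le_const (μ := μ)
    measure_ball_lt_top hbound)
  rw [Real.div_rpow dist_nonneg zero_le_two, Real.rpow_neg zero_le_two, div_inv_eq_mul] at this
  linarith

lemma setIntegral_ball_dist_rpow_neg_le_of_le_two_mul (hγ0 : 0 ≤ γ) (hγd : γ < finrank ℝ E)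
    {a y : E} {R : ℝ} (hR : 0 < R) (hya : y ≠ a) (hay : dist a y ≤ 2 * R) :
    ∫ x in ball a R, dist x y ^ (-γ) ∂μ ≤
      3 ^ (finrank ℝ E - γ) * 2 ^ γ * (∫ x in ball (0 : E) 1, ‖x‖ ^ (-γ) ∂μ) *
        R ^ finrank ℝ E * dist a y ^ (-γ) := by
  have hsub : ball a R ⊆ ball y (3 * R) := ball_subset_ball' (by linarith)
  have hdist : (2 * R) ^ (-γ) ≤ dist a y ^ (-γ) :=
    Real.rpow_le_rpow_of_nonpos (dist_pos.2 hya.symm) hay (by linarith)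
  have : 0 ≤ ∫ x in ball (0 : E) 1, ‖x‖ ^ (-γ) ∂μ := integral_nonneg fun x => by positivity
  calc ∫ x in ball a R, dist x y ^ (-γ) ∂μ ≤ ∫ x in ball y (3 * R), dist x y ^ (-γ) ∂μ :=
        setIntegral_mono_set (integrableOn_ball_dist_rpow_neg μ hγd _ _ _)
          (Eventually.of_forall fun x => by positivity) hsub.eventuallyLE
    _ = 3 ^ (finrank ℝ E - γ) * 2 ^ γ * (∫ x in ball (0 : E) 1, ‖x‖ ^ (-γ) ∂μ) *
        R ^ finrank ℝ E * (2 * R) ^ (-γ) := by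
        rw [setIntegral_ball_dist_rpow_neg μ y (by positivity),
          Real.mul_rpow zero_le_three hR.le, Real.mul_rpow zero_le_two hR.le,
          Real.rpow_neg zero_le_two, sub_eq_add_neg (finrank ℝ E : ℝ), Real.rpow_add hR,
          Real.rpow_natCast]
        field_simp
    _ ≤ _ := by gcongr

/-- The Muckenhoupt `A₁` condition. -/
lemma exists_setIntegral_ball_dist_rpow_neg_le (hγ0 : 0 ≤ γ) (hγd : γ < finrank ℝ E) :
    ∃ C > 0, ∀ a y : E, y ≠ a → ∀ R > 0,
      ∫ x in ball a R, dist x y ^ (-γ) ∂μ ≤ C * μ.real (ball a R) * dist a y ^ (-γ) := by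
  set I := ∫ x in ball (0 : E) 1, ‖x‖ ^ (-γ) ∂μ
  set ω := μ.real (ball (0 : E) 1)
  have : 0 ≤ I := integral_nonneg fun x => by positivity
  have hω : 0 < ω :=
    ENNReal.toReal_pos (measure_ball_pos μ _ zero_lt_one).ne' measure_ball_lt_top.ne
  refine ⟨2 ^ γ + 3 ^ (finrank ℝ E - γ) * 2 ^ γ * I / ω, by positivity,
    fun a y hya R hR => ?_⟩
  rw [add_mul, add_mul]
  rcases le_total (2 * R) (dist a y) with hay | hay
  · refine (setIntegral_ball_dist_rpow_neg_le_of_two_mul_le μ hγ0 hR hay).trans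
      (le_add_of_nonneg_right (by positivity))
  · refine (setIntegral_ball_dist_rpow_neg_le_of_le_two_mul μ hγ0 hγd hR hya hay).trans ?_
    rw [← Measure.addHaar_real_closedBall_eq_addHaar_real_ball,
      Measure.addHaar_real_closedBall μ a hR.le]
    refine le_add_of_nonneg_of_le (by positivity) (le_of_eq ?_)
    field_simp
    ring

lemma exists_pos_forall_setLIntegral_dist_rpow_neg_lt (hγ0 : 0 ≤ γ) (hγd : γ < finrank ℝ E)
    {ε : ENNReal} (hε : ε ≠ 0) :
    ∃ δ > 0, ∀ s : Set E, μ s < δ → ∀ y, ∫⁻ z in s, ENNReal.ofReal (dist y z ^ (-γ)) ∂μ < ε := by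
  set k : E → ENNReal := fun z => ENNReal.ofReal (‖z‖ ^ (-γ)) with hk
  have hfinite : ∫⁻ z, (ball 0 1).indicator k z ∂μ ≠ ⊤ := by
    rw [lintegral_indicator measurableSet_ball]
    simpa [hk] using (integrableOn_ball_dist_rpow_neg μ hγd 0 0 1).lintegral_lt_top.ne
  obtain ⟨δ, hδ, hδε⟩ := exists_pos_setLIntegral_lt_of_measure_lt hfinite (ENNReal.half_pos hε).ne'
  have hle : ∀ z, k z ≤ (ball 0 1).indicator k z + 1 := by
    intro z
    by_cases hz : z ∈ ball (0 : E) 1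
    · simp [hz]
    · rw [indicator_of_notMem hz, zero_add]
      have hz1 : 1 ≤ ‖z‖ := by simpa using hz
      exact ENNReal.ofReal_le_one.2 (Real.rpow_le_one_of_one_le_of_nonpos hz1 (by linarith))
  refine ⟨min δ (ε / 2), lt_min hδ (ENNReal.half_pos hε), fun s hs y => ?_⟩
  have hpres := Measure.measurePreserving_sub_left μ y
  have hemb : MeasurableEmbedding fun z : E => y - z := (Homeomorph.subLeft y).measurableEmbedding
  set t := (fun z => y - z) ⁻¹' s with ht
  have hμt : μ t = μ s := hpres.measure_preimage_emb hemb s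
  calc ∫⁻ z in s, ENNReal.ofReal (dist y z ^ (-γ)) ∂μ = ∫⁻ z in t, k z ∂μ := by
        rw [ht, ← hpres.setLIntegral_comp_preimage_emb hemb]
        simp [hk]
    _ ≤ ∫⁻ z in t, ((ball 0 1).indicator k z + 1) ∂μ := lintegral_mono hle
    _ = (∫⁻ z in t, (ball 0 1).indicator k z ∂μ) + μ t := by
        rw [lintegral_add_right _ measurable_const, setLIntegral_one]
    _ < ε / 2 + ε / 2 := by
        rw [hμt]
        exact ENNReal.add_lt_add (hδε t (hμt ▸ hs.trans_le (min_le_left _ _)))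
          (hs.trans_le (min_le_right _ _))
    _ = ε := ENNReal.add_halves ε

lemma exists_pos_forall_integrableOn_and_setIntegral_dist_rpow_neg_le (hγ0 : 0 ≤ γ)
    (hγd : γ < finrank ℝ E) {ε : ℝ} (hε : 0 < ε) :
    ∃ δ > 0, ∀ s : Set E, μ s < δ → ∀ y, IntegrableOn (fun z => dist y z ^ (-γ)) s μ ∧
      ∫ z in s, dist y z ^ (-γ) ∂μ ≤ ε := by
  obtain ⟨δ, hδ, hsmall⟩ := exists_pos_forall_setLIntegral_dist_rpow_neg_lt μ hγ0 hγd
    (ENNReal.ofReal_pos.2 hε).ne'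
  refine ⟨δ, hδ, fun s hs y => ?_⟩
  have hnonneg : ∀ z : E, 0 ≤ dist y z ^ (-γ) := fun z => by positivity
  have hmeas : Measurable fun z : E => dist y z ^ (-γ) :=
    (measurable_const.dist measurable_id).pow_const _
  refine ⟨⟨hmeas.aestronglyMeasurable, ?_⟩, ?_⟩
  · rw [hasFiniteIntegral_iff_ofReal (Eventually.of_forall hnonneg)]
    exact (hsmall s hs y).trans ENNReal.ofReal_lt_top
  · rw [integral_eq_lintegral_of_nonneg_ae (Eventually.of_forall hnonneg)
      hmeas.aestronglyMeasurable]
    exact ENNReal.toReal_le_of_le_ofReal hε.le (hsmall s hs y).le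

end RieszKernel

section Kelvin

variable {E : Type*} [NormedAddCommGroup E] [InnerProductSpace ℝ E] {γ : ℝ} {f : E → ℝ}
  {c y z : E} {r : ℝ}

lemma image_inversion_ball_diff_center (c : E) (hr : 0 < r) :
    inversion c r '' (ball c r \ {c}) = (closedBall c r)ᶜ := by
  ext w
  simp only [mem_compl_iff, mem_closedBall, not_le]
  constructor
  · rintro ⟨z, ⟨hzr, hzc⟩, rfl⟩
    rw [dist_inversion_center, lt_div_iff₀ (dist_pos.2 hzc), sq]
    exact mul_lt_mul_of_pos_left hzr hr
  · intro hw
    have hw0 : 0 < dist w c := hr.trans hw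
    refine ⟨inversion c r w, ⟨?_, ?_⟩, inversion_inversion c hr.ne' w⟩
    · rw [mem_ball, dist_inversion_center, div_lt_iff₀ hw0, sq]
      exact mul_lt_mul_of_pos_left hw hr
    · simpa only [mem_singleton_iff, inversion_eq_center hr.ne'] using dist_pos.1 hw0

/-- The Kelvin transform of weight `γ` of `f` in the sphere of centre `c` and radius `r`.
It is meaningful for `z ≠ c` only. -/
noncomputable def kelvin (γ : ℝ) (f : E → ℝ) (c : E) (r : ℝ) (z : E) : ℝ :=
  (r / dist z c) ^ γ * f (inversion c r z)

lemma kelvin_kelvin (γ : ℝ) (f : E → ℝ) (hr : 0 < r) (hz : z ≠ c) :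
    kelvin γ (kelvin γ f c r) c r z = f z := by
  have := dist_pos.2 hz
  rw [kelvin, kelvin, dist_inversion_center, inversion_inversion c hr.ne', ← mul_assoc,
    ← Real.mul_rpow (by positivity) (by positivity)]
  field_simp
  simp

lemma kelvin_add_mul (a b : ℝ) (f g : E → ℝ) (hr : 0 < r) (hz : z ≠ c) :
    kelvin (a + b) (fun w => f w * g w) c r z = kelvin a f c r z * kelvin b g c r z := by
  have := dist_pos.2 hz
  rw [kelvin, Real.rpow_add (by positivity)]
  exact mul_mul_mul_comm _ _ _ _

lemma kelvin_pos (hf : ∀ x, 0 < f x) (hr : 0 < r) (hz : z ≠ c) : 0 < kelvin γ f c r z :=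
  mul_pos (Real.rpow_pos_of_pos (div_pos hr (dist_pos.2 hz)) _) (hf _)

lemma kelvin_rpow_le {p q : ℝ} (hf : ∀ x, 0 ≤ f x) (hpq : γ * p ≤ q) (hz : z ∈ ball c r)
    (hzc : z ≠ c) : kelvin γ f c r z ^ p ≤ kelvin q (fun w => f w ^ p) c r z := by
  have hzc := dist_pos.2 hzc
  have hone : 1 ≤ r / dist z c := (one_le_div hzc).2 (mem_ball.1 hz).le
  rw [kelvin, kelvin, Real.mul_rpow (by positivity) (hf _), ← Real.rpow_mul (by positivity)]
  exact mul_le_mul_of_nonneg_right (Real.rpow_le_rpow_of_exponent_le hone hpq)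
    (Real.rpow_nonneg (hf _) _)

lemma mul_rpow_neg_le_kelvin {k R : ℝ} (hγ : 0 ≤ γ) (hk : 0 ≤ k)
    (hf : k * (dist (inversion c r z) c + R) ^ (-γ) ≤ f (inversion c r z)) (hr : 0 < r)
    (hrR : r ≤ R) (hz : z ∈ ball c r) (hzc : z ≠ c) :
    k * (2 * R) ^ (-γ) ≤ kelvin γ f c r z := by
  have hzc := dist_pos.2 hzc
  have hle : dist z c / r * (dist (inversion c r z) c + R) ≤ 2 * R := by
    have hone : dist z c / r ≤ 1 := (div_le_one hr).2 (mem_ball.1 hz).le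
    have hexpand : dist z c / r * (dist (inversion c r z) c + R) = r + dist z c / r * R := by
      rw [dist_inversion_center]
      field_simp
    nlinarith
  have hpow : (r / dist z c) ^ γ = (dist z c / r) ^ (-γ) := by
    rw [Real.rpow_neg (by positivity), ← Real.inv_rpow (by positivity), inv_div]
  have hR : 0 < R := hr.trans_le hrR
  calc k * (2 * R) ^ (-γ)
      ≤ k * (dist z c / r * (dist (inversion c r z) c + R)) ^ (-γ) := by
        gcongr k * ?_
        exact Real.rpow_le_rpow_of_nonpos (by positivity) hle (neg_nonpos.2 hγ)
    _ = (r / dist z c) ^ γ * (k * (dist (inversion c r z) c + R) ^ (-γ)) := by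
        rw [Real.mul_rpow (by positivity) (by positivity), hpow]
        ring
    _ ≤ kelvin γ f c r z := mul_le_mul_of_nonneg_left hf (by positivity)

lemma dist_inversion_mul_dist (hr : r ≠ 0) (hy : y ≠ c) (hz : z ≠ c) :
    dist (inversion c r y) z * dist y c = dist y (inversion c r z) * dist z c := by
  have := dist_pos.2 hy
  have := dist_pos.2 hz
  have h := dist_inversion_inversion hy ((inversion_eq_center hr).not.2 hz) r
  rw [inversion_inversion c hr, dist_inversion_center] at h
  rw [h]
  field_simp

lemma kelvin_dist_rpow_neg (γ : ℝ) (hr : 0 < r) (y z : E) :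
    kelvin γ (fun w => dist w z ^ (-γ)) c r y =
      (dist y c / r * dist (inversion c r y) z) ^ (-γ) := by
  rw [kelvin, Real.mul_rpow (by positivity) dist_nonneg,
    Real.rpow_neg (x := dist y c / r) (by positivity), ← Real.inv_rpow (by positivity), inv_div]

lemma kelvin_dist_rpow_neg_comm (γ : ℝ) (hr : 0 < r) (hy : y ≠ c) (hz : z ≠ c) :
    kelvin γ (fun w => dist y w ^ (-γ)) c r z = kelvin γ (fun w => dist w z ^ (-γ)) c r y := by
  simp_rw [dist_comm y]
  rw [kelvin_dist_rpow_neg γ hr, kelvin_dist_rpow_neg γ hr, div_mul_comm, div_mul_comm (dist y c),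
    div_mul_eq_mul_div, div_mul_eq_mul_div, dist_inversion_mul_dist hr.ne' hy hz, dist_comm _ y]

lemma sq_dist_mul_dist_inversion_sub_sq_dist (hr : 0 < r) (hy : y ≠ c) :
    (dist y c / r * dist (inversion c r y) z) ^ 2 - dist y z ^ 2 =
      (r ^ 2 - dist y c ^ 2) * (r ^ 2 - dist z c ^ 2) / r ^ 2 := by
  have := dist_pos.2 hy
  have hyz : dist y z ^ 2 = dist y c ^ 2 - 2 * inner ℝ (y - c) (z - c) + dist z c ^ 2 := by
    simp_rw [dist_eq_norm]
    rw [← norm_sub_sq_real, sub_sub_sub_cancel_right]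
  have hinv : dist (inversion c r y) z ^ 2 = (r / dist y c) ^ 4 * dist y c ^ 2 -
      2 * ((r / dist y c) ^ 2 * inner ℝ (y - c) (z - c)) + dist z c ^ 2 := by
    have hsub : inversion c r y - z = (r / dist y c) ^ 2 • (y - c) - (z - c) := by
      rw [inversion, vsub_eq_sub, vadd_eq_add]
      abel
    rw [dist_eq_norm (inversion c r y), hsub, norm_sub_sq_real, norm_smul, mul_pow,
      real_inner_smul_left, ← dist_eq_norm, ← dist_eq_norm, Real.norm_of_nonneg (by positivity)]
    ring
  rw [mul_pow, hinv, hyz]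
  field_simp
  ring

/-- The kernel of `f - kelvin γ f c r` when `f` is a Riesz potential: the difference between the
kernel `|y - z|^{-γ}` and its Kelvin transform. -/
noncomputable def kernelDiff (γ : ℝ) (c : E) (r : ℝ) (y z : E) : ℝ :=
  dist y z ^ (-γ) - kelvin γ (fun w => dist w z ^ (-γ)) c r y

lemma kernelDiff_le (hr : 0 ≤ r) (y z : E) : kernelDiff γ c r y z ≤ dist y z ^ (-γ) :=
  sub_le_self _ (by unfold kelvin; positivity)

lemma kernelDiff_pos (hγ : 0 < γ) (hr : 0 < r) (hy : y ∈ ball c r) (hyc : y ≠ c)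
    (hz : z ∈ ball c r) (hzy : z ≠ y) : 0 < kernelDiff γ c r y z := by
  have hsq : 0 < (r ^ 2 - dist y c ^ 2) * (r ^ 2 - dist z c ^ 2) / r ^ 2 := by
    have hy2 := pow_lt_pow_left₀ (mem_ball.1 hy) dist_nonneg two_ne_zero
    have hz2 := pow_lt_pow_left₀ (mem_ball.1 hz) dist_nonneg two_ne_zero
    exact div_pos (mul_pos (sub_pos.2 hy2) (sub_pos.2 hz2)) (by positivity)
  rw [← sq_dist_mul_dist_inversion_sub_sq_dist hr hyc, sub_pos] at hsq
  rw [kernelDiff, kelvin_dist_rpow_neg γ hr, sub_pos]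
  exact Real.rpow_lt_rpow_of_neg (dist_pos.2 hzy.symm)
    (lt_of_pow_lt_pow_left₀ 2 (by positivity) hsq) (neg_lt_zero.2 hγ)

lemma continuousAt_inversion (hz : z ≠ c) : ContinuousAt (inversion c r) z :=
  ContinuousAt.inversion continuousAt_const continuousAt_const continuousAt_id hz

lemma continuousAt_inversion_radius (hz : z ≠ c) : ContinuousAt (fun s => inversion c s z) r :=
  ContinuousAt.inversion continuousAt_const continuousAt_id continuousAt_const hz

lemma continuousAt_kelvin (hr : 0 < r) (hz : z ≠ c) (hf : ContinuousAt f (inversion c r z)) :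
    ContinuousAt (kelvin γ f c r) z := by
  have := dist_pos.2 hz
  have hdiv : ContinuousAt (fun w => r / dist w c) z :=
    continuousAt_const.div (by fun_prop) this.ne'
  have hpow := hdiv.rpow_const (p := γ) (Or.inl (div_pos hr this).ne')
  exact hpow.mul (hf.comp (continuousAt_inversion hz))

lemma continuousAt_kelvin_radius (hr : 0 < r) (hz : z ≠ c)
    (hf : ContinuousAt f (inversion c r z)) : ContinuousAt (fun s => kelvin γ f c s z) r := by
  have := dist_pos.2 hz
  have hpow : ContinuousAt (fun s => (s / dist z c) ^ γ) r :=
    (continuousAt_id.div_const _).rpow_const (Or.inl (div_pos hr this).ne')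
  exact hpow.mul (ContinuousAt.comp (f := fun s => inversion c s z) hf
    (continuousAt_inversion_radius hz))

lemma measurable_inversion [MeasurableSpace E] [BorelSpace E] (c : E) (r : ℝ) :
    Measurable (inversion c r) :=
  measurable_of_continuousOn_compl_singleton c fun _ hz =>
    (continuousAt_inversion hz).continuousWithinAt

lemma measurable_kelvin [FiniteDimensional ℝ E] [MeasurableSpace E] [BorelSpace E] (γ : ℝ)
    (hf : Measurable f) (c : E) (r : ℝ) : Measurable (kelvin γ f c r) :=
  ((measurable_const.div (measurable_id.dist measurable_const)).pow_const _).mul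
    (hf.comp (measurable_inversion c r))

end Kelvin

section KelvinIntegral

variable {E : Type*} [NormedAddCommGroup E] [InnerProductSpace ℝ E] [FiniteDimensional ℝ E]

lemma abs_det_fderiv_inversion (c z : E) (r : ℝ) :
    |((r / dist z c) ^ 2 • ((Submodule.span ℝ {z - c})ᗮ.reflection : E →L[ℝ] E)).det| =
      (r / dist z c) ^ (2 * finrank ℝ E : ℝ) := by
  have hdet : LinearMap.det (((Submodule.span ℝ {z - c})ᗮ.reflection : E →L[ℝ] E) : E →ₗ[ℝ] E) =
      (-1) ^ finrank ℝ (Submodule.span ℝ {z - c})ᗮᗮ :=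
    Submodule.det_reflection (𝕜 := ℝ) (Submodule.span ℝ {z - c})ᗮ
  rw [ContinuousLinearMap.det, ContinuousLinearMap.toLinearMap_smul, LinearMap.det_smul, hdet,
    abs_mul, abs_pow (-1 : ℝ), abs_neg, abs_one, one_pow, mul_one, ← pow_mul,
    abs_of_nonneg ((even_two_mul _).pow_nonneg _), ← Real.rpow_natCast]
  push_cast
  rfl

variable [Nontrivial E] [MeasurableSpace E] [BorelSpace E] (μ : Measure E) [μ.IsAddHaarMeasure]
  {γ : ℝ} {f : E → ℝ} {c y : E} {r : ℝ}

lemma integrableOn_compl_closedBall_iff_kelvin (F : E → ℝ) (c : E) (hr : 0 < r) :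
    IntegrableOn F (closedBall c r)ᶜ μ ↔
      IntegrableOn (kelvin (2 * finrank ℝ E) F c r) (ball c r) μ := by
  have hball : (ball c r \ {c} : Set E) =ᵐ[μ] ball c r :=
    sdiff_null_ae_eq_self (measure_singleton c)
  rw [← image_inversion_ball_diff_center c hr,
    integrableOn_image_iff_integrableOn_abs_det_fderiv_smul μ
      (measurableSet_ball.diff (measurableSet_singleton c))
      (fun z hz => (hasFDerivAt_inversion hz.2).hasFDerivWithinAt)
      (inversion_injective c hr.ne').injOn]
  simp_rw [abs_det_fderiv_inversion]
  exact integrableOn_congr_set_ae hball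

lemma setIntegral_compl_closedBall_eq_kelvin (F : E → ℝ) (c : E) (hr : 0 < r) :
    ∫ z in (closedBall c r)ᶜ, F z ∂μ = ∫ z in ball c r, kelvin (2 * finrank ℝ E) F c r z ∂μ := by
  have hball : (ball c r \ {c} : Set E) =ᵐ[μ] ball c r :=
    sdiff_null_ae_eq_self (measure_singleton c)
  rw [← image_inversion_ball_diff_center c hr,
    integral_image_eq_integral_abs_det_fderiv_smul μ
      (measurableSet_ball.diff (measurableSet_singleton c))
      (fun z hz => (hasFDerivAt_inversion hz.2).hasFDerivWithinAt)
      (inversion_injective c hr.ne').injOn]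
  simp_rw [abs_det_fderiv_inversion]
  exact setIntegral_congr_set hball

lemma integral_eq_setIntegral_ball_add_kelvin {F : E → ℝ} (hF : Integrable F μ) (c : E)
    (hr : 0 < r) : ∫ z, F z ∂μ =
      (∫ z in ball c r, F z ∂μ) + ∫ z in ball c r, kelvin (2 * finrank ℝ E) F c r z ∂μ := by
  have hball : ball c r =ᵐ[μ] closedBall c r :=
    ae_eq_of_subset_of_measure_ge ball_subset_closedBall
      (Measure.addHaar_closedBall_eq_addHaar_ball μ c r).le
      measurableSet_ball.nullMeasurableSet measure_closedBall_lt_top.ne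
  rw [← setIntegral_compl_closedBall_eq_kelvin μ F c hr, setIntegral_congr_set hball,
    integral_add_compl measurableSet_closedBall hF]

/-- The Riesz potential of `f` with kernel `|y - z|^{-γ}`. -/
noncomputable def rieszPotential (γ : ℝ) (f : E → ℝ) (y : E) : ℝ :=
  ∫ z, dist y z ^ (-γ) * f z ∂μ

variable {μ} in
lemma mul_rpow_neg_le_rieszPotential {m R : ℝ} (hγ : 0 ≤ γ) (hf : ∀ z, 0 ≤ f z)
    (hint : Integrable (fun z => dist y z ^ (-γ) * f z) μ) (hm : ∀ z ∈ ball c R, m ≤ f z)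
    (hR : 0 ≤ R) :
    μ.real (ball c R) * m * (dist y c + R) ^ (-γ) ≤ rieszPotential μ γ f y := by
  have hle : ∀ᵐ z ∂μ, z ∈ ball c R → (dist y c + R) ^ (-γ) * m ≤ dist y z ^ (-γ) * f z := by
    filter_upwards [Measure.ae_ne μ y] with z hzy hz
    have hdist : dist y z ≤ dist y c + R := by
      linarith [dist_triangle_right y z c, mem_ball.1 hz]
    have hpow := Real.rpow_le_rpow_of_nonpos (dist_pos.2 hzy.symm) hdist (neg_nonpos.2 hγ)
    exact (mul_le_mul_of_nonneg_left (hm z hz) (by positivity)).trans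
      (mul_le_mul_of_nonneg_right hpow (hf z))
  calc μ.real (ball c R) * m * (dist y c + R) ^ (-γ)
      = ∫ _ in ball c R, (dist y c + R) ^ (-γ) * m ∂μ := by
        rw [setIntegral_const, smul_eq_mul, mul_assoc, mul_comm m]
    _ ≤ ∫ z in ball c R, dist y z ^ (-γ) * f z ∂μ :=
        setIntegral_mono_on_ae (integrableOn_const measure_ball_lt_top.ne) hint.integrableOn
          measurableSet_ball hle
    _ ≤ rieszPotential μ γ f y :=
        setIntegral_le_integral hint (Eventually.of_forall fun z =>
          mul_nonneg (Real.rpow_nonneg dist_nonneg _) (hf z))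

lemma kelvin_dist_rpow_neg_mul_ae_eq (γ : ℝ) (f : E → ℝ) (hr : 0 < r) (hy : y ≠ c) :
    kelvin (2 * finrank ℝ E) (fun z => dist y z ^ (-γ) * f z) c r =ᵐ[μ] fun z =>
      kelvin γ (fun w => dist w z ^ (-γ)) c r y * kelvin (2 * finrank ℝ E - γ) f c r z := by
  filter_upwards [Measure.ae_ne μ c] with z hz
  rw [← kelvin_dist_rpow_neg_comm γ hr hy hz, ← kelvin_add_mul _ _ _ _ hr hz, add_sub_cancel]

lemma integrableOn_ball_kelvin_mul_kelvin
    (hf : Integrable (fun z => dist y z ^ (-γ) * f z) μ) (hr : 0 < r) (hy : y ≠ c) :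
    IntegrableOn (fun z => kelvin γ (fun w => dist w z ^ (-γ)) c r y *
      kelvin (2 * finrank ℝ E - γ) f c r z) (ball c r) μ :=
  ((integrableOn_compl_closedBall_iff_kelvin μ _ c hr).1 hf.integrableOn).congr
    (ae_restrict_of_ae (kelvin_dist_rpow_neg_mul_ae_eq μ γ f hr hy))

lemma rieszPotential_eq_setIntegral_ball (hf : Integrable (fun z => dist y z ^ (-γ) * f z) μ)
    (hr : 0 < r) (hy : y ≠ c) : rieszPotential μ γ f y =
      (∫ z in ball c r, dist y z ^ (-γ) * f z ∂μ) +
      ∫ z in ball c r, kelvin γ (fun w => dist w z ^ (-γ)) c r y *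
        kelvin (2 * finrank ℝ E - γ) f c r z ∂μ := by
  rw [rieszPotential, integral_eq_setIntegral_ball_add_kelvin μ hf c hr]
  congr 1
  exact integral_congr_ae (ae_restrict_of_ae (kelvin_dist_rpow_neg_mul_ae_eq μ γ f hr hy))

omit [FiniteDimensional ℝ E] [Nontrivial E] [μ.IsAddHaarMeasure] in
lemma integrableOn_ball_kelvin_mul
    (hf : Integrable (fun z => dist (inversion c r y) z ^ (-γ) * f z) μ) :
    IntegrableOn (fun z => kelvin γ (fun w => dist w z ^ (-γ)) c r y * f z) (ball c r) μ :=
  IntegrableOn.congr_fun (hf.integrableOn.const_mul ((r / dist y c) ^ γ))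
    (fun _ _ => (mul_assoc _ _ _).symm) measurableSet_ball

lemma integrableOn_ball_mul_kelvin
    (hf : Integrable (fun z => dist (inversion c r y) z ^ (-γ) * f z) μ) (hr : 0 < r)
    (hy : y ≠ c) :
    IntegrableOn (fun z => dist y z ^ (-γ) * kelvin (2 * finrank ℝ E - γ) f c r z)
      (ball c r) μ := by
  refine IntegrableOn.congr_fun ((integrableOn_ball_kelvin_mul_kelvin μ hf hr
    ((inversion_eq_center hr.ne').not.2 hy)).const_mul ((r / dist y c) ^ γ))
    (fun z _ => ?_) measurableSet_ball
  rw [← kelvin_kelvin γ (fun w => dist w z ^ (-γ)) hr hy]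
  exact (mul_assoc _ _ _).symm

lemma kelvin_rieszPotential_eq_setIntegral_ball
    (hf : Integrable (fun z => dist (inversion c r y) z ^ (-γ) * f z) μ) (hr : 0 < r)
    (hy : y ≠ c) : kelvin γ (rieszPotential μ γ f) c r y =
      (∫ z in ball c r, kelvin γ (fun w => dist w z ^ (-γ)) c r y * f z ∂μ) +
      ∫ z in ball c r, dist y z ^ (-γ) * kelvin (2 * finrank ℝ E - γ) f c r z ∂μ := by
  rw [kelvin, rieszPotential_eq_setIntegral_ball μ hf hr ((inversion_eq_center hr.ne').not.2 hy),
    mul_add, ← integral_const_mul, ← integral_const_mul]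
  congr 1 <;> congr 1 <;> ext z
  · exact (mul_assoc _ _ _).symm
  · rw [← kelvin_kelvin γ (fun w => dist w z ^ (-γ)) hr hy]
    exact (mul_assoc _ _ _).symm

lemma integrableOn_ball_kernelDiff_mul_sub_kelvin
    (hf : Integrable (fun z => dist y z ^ (-γ) * f z) μ)
    (hf' : Integrable (fun z => dist (inversion c r y) z ^ (-γ) * f z) μ) (hr : 0 < r)
    (hy : y ≠ c) :
    IntegrableOn (fun z => kernelDiff γ c r y z * (f z - kelvin (2 * finrank ℝ E - γ) f c r z))
      (ball c r) μ := by
  refine ((hf.integrableOn.add (integrableOn_ball_kelvin_mul_kelvin μ hf hr hy)).sub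
    ((integrableOn_ball_kelvin_mul μ hf').add
      (integrableOn_ball_mul_kelvin μ hf' hr hy))).congr_fun (fun z _ => ?_) measurableSet_ball
  simp only [Pi.add_apply, Pi.sub_apply, kernelDiff]
  ring

lemma rieszPotential_sub_kelvin (hf : Integrable (fun z => dist y z ^ (-γ) * f z) μ)
    (hf' : Integrable (fun z => dist (inversion c r y) z ^ (-γ) * f z) μ) (hr : 0 < r)
    (hy : y ≠ c) : rieszPotential μ γ f y - kelvin γ (rieszPotential μ γ f) c r y =
      ∫ z in ball c r,
        kernelDiff γ c r y z * (f z - kelvin (2 * finrank ℝ E - γ) f c r z) ∂μ := by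
  have h₁ := hf.integrableOn (s := ball c r)
  have h₂ := integrableOn_ball_kelvin_mul_kelvin μ hf hr hy
  have h₃ := integrableOn_ball_kelvin_mul μ hf'
  have h₄ := integrableOn_ball_mul_kelvin μ hf' hr hy
  rw [rieszPotential_eq_setIntegral_ball μ hf hr hy,
    kelvin_rieszPotential_eq_setIntegral_ball μ hf' hr hy, ← integral_add h₁ h₂,
    ← integral_add h₃ h₄, ← integral_sub (by exact h₁.add h₂) (by exact h₃.add h₄)]
  congr 1
  ext z
  rw [kernelDiff]
  ring

end KelvinIntegral

section RieszPotentialAverage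

variable {E : Type*} [NormedAddCommGroup E] [MeasurableSpace E] {μ : Measure E} {γ : ℝ}
  {f : E → ℝ} {a y : E}

lemma ofReal_rieszPotential_le (hf : ∀ z, 0 ≤ f z) (y : E) :
    ENNReal.ofReal (rieszPotential μ γ f y) ≤
      ∫⁻ z, ENNReal.ofReal (dist y z ^ (-γ)) * ENNReal.ofReal (f z) ∂μ :=
  calc ENNReal.ofReal (rieszPotential μ γ f y) ≤ ‖rieszPotential μ γ f y‖ₑ :=
        Real.ofReal_le_enorm _
    _ ≤ ∫⁻ z, ‖dist y z ^ (-γ) * f z‖ₑ ∂μ := enorm_integral_le_lintegral_enorm _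
    _ = ∫⁻ z, ENNReal.ofReal (dist y z ^ (-γ)) * ENNReal.ofReal (f z) ∂μ :=
        lintegral_congr fun z => by
          rw [enorm_mul, Real.enorm_of_nonneg (by positivity), Real.enorm_of_nonneg (hf z)]

lemma ofReal_rieszPotential (hf : ∀ z, 0 ≤ f z)
    (hint : Integrable (fun z => dist y z ^ (-γ) * f z) μ) :
    ENNReal.ofReal (rieszPotential μ γ f y) =
      ∫⁻ z, ENNReal.ofReal (dist y z ^ (-γ)) * ENNReal.ofReal (f z) ∂μ := by
  rw [rieszPotential, ofReal_integral_eq_lintegral_ofReal hint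
    (.of_forall fun z => mul_nonneg (by positivity) (hf z))]
  exact lintegral_congr fun z => ENNReal.ofReal_mul (by positivity)

lemma setLIntegral_ball_ofReal_le_rieszPotential [NullSingletonClass μ]
    [OpensMeasurableSpace E] (hγ : 0 ≤ γ) (hf : ∀ z, 0 ≤ f z)
    (hint : Integrable (fun z => dist a z ^ (-γ) * f z) μ) {R : ℝ} (hR : 0 < R) :
    ∫⁻ z in ball a R, ENNReal.ofReal (f z) ∂μ ≤
      ENNReal.ofReal (R ^ γ * rieszPotential μ γ f a) := by
  have hle : ∀ᵐ z ∂μ, z ∈ ball a R → ENNReal.ofReal (f z) ≤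
      ENNReal.ofReal (R ^ γ) * (ENNReal.ofReal (dist a z ^ (-γ)) * ENNReal.ofReal (f z)) := by
    filter_upwards [Measure.ae_ne μ a] with z hza hz
    have hdist := dist_pos.2 hza.symm
    have hone : 1 ≤ R ^ γ * dist a z ^ (-γ) := by
      rw [Real.rpow_neg hdist.le, ← div_eq_mul_inv, one_le_div (by positivity)]
      exact Real.rpow_le_rpow hdist.le (mem_ball'.1 hz).le hγ
    rw [← mul_assoc, ← ENNReal.ofReal_mul (by positivity)]
    exact le_mul_of_one_le_left' (ENNReal.one_le_ofReal.2 hone)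
  calc ∫⁻ z in ball a R, ENNReal.ofReal (f z) ∂μ
      ≤ ∫⁻ z in ball a R, ENNReal.ofReal (R ^ γ) *
          (ENNReal.ofReal (dist a z ^ (-γ)) * ENNReal.ofReal (f z)) ∂μ :=
        setLIntegral_mono_ae' measurableSet_ball hle
    _ ≤ ∫⁻ z, ENNReal.ofReal (R ^ γ) *
          (ENNReal.ofReal (dist a z ^ (-γ)) * ENNReal.ofReal (f z)) ∂μ :=
        setLIntegral_le_lintegral _ _
    _ = ENNReal.ofReal (R ^ γ * rieszPotential μ γ f a) := by
        rw [lintegral_const_mul' _ _ ENNReal.ofReal_ne_top, ← ofReal_rieszPotential hf hint,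
          ENNReal.ofReal_mul (by positivity)]

lemma exists_setLIntegral_ball_rieszPotential_le [NormedSpace ℝ E] [FiniteDimensional ℝ E]
    [Nontrivial E] [BorelSpace E] (μ : Measure E) [μ.IsAddHaarMeasure] (hγ : 0 ≤ γ)
    (hγd : γ < finrank ℝ E) :
    ∃ C > 0, ∀ f : E → ℝ, Measurable f → (∀ z, 0 ≤ f z) → ∀ a,
      Integrable (fun z => dist a z ^ (-γ) * f z) μ → ∀ R > 0,
        ∫⁻ x in ball a R, ENNReal.ofReal (rieszPotential μ γ f x) ∂μ ≤
          ENNReal.ofReal (C * μ.real (ball a R) * rieszPotential μ γ f a) := by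
  obtain ⟨C, hC, hA₁⟩ := exists_setIntegral_ball_dist_rpow_neg_le μ hγ hγd
  refine ⟨C, hC, fun f hfm hf a hint R hR => ?_⟩
  have hA₁' : ∀ y ≠ a, ∫⁻ x in ball a R, ENNReal.ofReal (dist x y ^ (-γ)) ∂μ ≤
      ENNReal.ofReal (C * μ.real (ball a R)) * ENNReal.ofReal (dist a y ^ (-γ)) := fun y hy => by
    rw [← ofReal_integral_eq_lintegral_ofReal (integrableOn_ball_dist_rpow_neg μ hγd a y R)
      (.of_forall fun x => by positivity), ← ENNReal.ofReal_mul (by positivity)]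
    exact ENNReal.ofReal_le_ofReal (hA₁ a y hy R hR)
  have hkernel : Measurable fun q : E × E => ENNReal.ofReal (dist q.1 q.2 ^ (-γ)) :=
    (measurable_dist.pow_const _).ennreal_ofReal
  calc ∫⁻ x in ball a R, ENNReal.ofReal (rieszPotential μ γ f x) ∂μ
      ≤ ∫⁻ x in ball a R,
          ∫⁻ y, ENNReal.ofReal (dist x y ^ (-γ)) * ENNReal.ofReal (f y) ∂μ ∂μ :=
        lintegral_mono fun x => ofReal_rieszPotential_le hf x
    _ = ∫⁻ y, (∫⁻ x in ball a R, ENNReal.ofReal (dist x y ^ (-γ)) ∂μ) *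
          ENNReal.ofReal (f y) ∂μ := by
        rw [lintegral_lintegral_swap
          (hkernel.mul (hfm.comp measurable_snd).ennreal_ofReal).aemeasurable]
        exact lintegral_congr fun y => lintegral_mul_const' _ _ ENNReal.ofReal_ne_top
    _ ≤ ∫⁻ y, ENNReal.ofReal (C * μ.real (ball a R)) *
          (ENNReal.ofReal (dist a y ^ (-γ)) * ENNReal.ofReal (f y)) ∂μ := by
        refine lintegral_mono_ae ?_
        filter_upwards [Measure.ae_ne μ a] with y hy
        rw [← mul_assoc]
        exact mul_le_mul_left (hA₁' y hy) _
    _ = ENNReal.ofReal (C * μ.real (ball a R) * rieszPotential μ γ f a) := by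
        rw [lintegral_const_mul' _ _ ENNReal.ofReal_ne_top, ← ofReal_rieszPotential hf hint,
          ENNReal.ofReal_mul (p := C * _) (by positivity)]

end RieszPotentialAverage

lemma exists_forall_rpow_sub_rpow_le (p : ℝ) {k : ℝ} (hk : 0 < k) (M : ℝ) :
    ∃ C > 0, ∀ a b, k ≤ a → a ≤ b → b ≤ M → b ^ p - a ^ p ≤ C * (b - a) := by
  have hderiv : ∀ t ∈ Icc k M, HasDerivAt (fun t : ℝ => t ^ p) (p * t ^ (p - 1)) t := fun t ht =>
    Real.hasDerivAt_rpow_const (Or.inl (hk.trans_le ht.1).ne')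
  have hcont : ContinuousOn (fun t : ℝ => p * t ^ (p - 1)) (Icc k M) :=
    continuousOn_const.mul (continuousOn_id.rpow_const fun t ht => Or.inl (hk.trans_le ht.1).ne')
  obtain ⟨C, hC⟩ := isCompact_Icc.exists_bound_of_continuousOn hcont
  refine ⟨max C 1, by positivity, fun a b hka hab hbM => ?_⟩
  have hlip := (convex_Icc k M).norm_image_sub_le_of_norm_hasDerivWithin_le
    (fun t ht => (hderiv t ht).hasDerivWithinAt)
    (fun t ht => (hC t ht).trans (le_max_left C 1)) ⟨hka, hab.trans hbM⟩ ⟨hka.trans hab, hbM⟩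
  rw [Real.norm_of_nonneg (sub_nonneg.2 hab)] at hlip
  exact (Real.le_norm_self _).trans hlip

lemma one_le_div_add_div_rpow {p s M : ℝ} (hp : p ≤ 0) (hs : 0 < s) (hM : 0 < M) :
    1 ≤ s / M + (s / M) ^ p := by
  have hsM : 0 < s / M := by positivity
  rcases le_total 1 (s / M) with h | h
  · exact le_add_of_le_of_nonneg h (by positivity)
  · exact le_add_of_nonneg_of_le hsM.le (Real.one_le_rpow_of_pos_of_le_one_of_nonpos hsM h hp)

lemma measure_le_lintegral_add_lintegral_rpow {Ω : Type*} [MeasurableSpace Ω] (μ : Measure Ω)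
    {f : Ω → ℝ} (hf : Measurable f) (hpos : ∀ x, 0 < f x) {p M : ℝ} (hp : p ≤ 0) (hM : 0 < M)
    (s : Set Ω) :
    μ s ≤ ENNReal.ofReal M⁻¹ * ∫⁻ x in s, ENNReal.ofReal (f x) ∂μ +
      ENNReal.ofReal (M ^ p)⁻¹ * ∫⁻ x in s, ENNReal.ofReal (f x ^ p) ∂μ := by
  have hpointwise : ∀ x, 1 ≤ ENNReal.ofReal M⁻¹ * ENNReal.ofReal (f x) +
      ENNReal.ofReal (M ^ p)⁻¹ * ENNReal.ofReal (f x ^ p) := fun x => by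
    have hfx := hpos x
    rw [← ENNReal.ofReal_mul (by positivity), ← ENNReal.ofReal_mul (by positivity),
      ← ENNReal.ofReal_add (by positivity) (by positivity), ENNReal.one_le_ofReal,
      inv_mul_eq_div, inv_mul_eq_div, ← Real.div_rpow hfx.le hM.le]
    exact one_le_div_add_div_rpow hp hfx hM
  rw [← lintegral_const_mul' _ _ ENNReal.ofReal_ne_top,
    ← lintegral_const_mul' _ _ ENNReal.ofReal_ne_top,
    ← lintegral_add_left (hf.ennreal_ofReal.const_mul _), ← setLIntegral_one]
  exact lintegral_mono hpointwise

section MovingSpheres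

variable {E : Type*} [NormedAddCommGroup E]

/-- A positive solution of `u(x) = ∫ |x - y|^{-γ} u(y)^p dy` that is continuous away from `x₀`,
the equation being required at all points other than `x₀`. -/
structure IsPuncturedSolution [MeasurableSpace E] (μ : Measure E) (γ p : ℝ) (x₀ : E)
    (u : E → ℝ) : Prop where
  pos : ∀ x, 0 < u x
  continuousOn : ContinuousOn u {x₀}ᶜ
  eq_rieszPotential : ∀ x ≠ x₀, u x = rieszPotential μ γ (fun y => u y ^ p) x

variable [InnerProductSpace ℝ E] {γ p : ℝ} {x₀ x₁ x₂ a c y z : E} {u : E → ℝ} {r R : ℝ}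

/-- The points of `ball c r` at which both the Kelvin transform in the sphere of centre `c` and
radius `r` and the equation at the inverse point make sense. -/
def comparisonDomain (x₀ c : E) (r : ℝ) : Set E :=
  {z ∈ ball c r | z ≠ c ∧ inversion c r z ≠ x₀}

/-- The set where `u ≤ kelvin γ u c r` fails; the method of moving spheres shows that it is
empty. -/
def violationSet (γ : ℝ) (x₀ : E) (u : E → ℝ) (c : E) (r : ℝ) : Set E :=
  {z ∈ comparisonDomain x₀ c r | kelvin γ u c r z < u z}

lemma isOpen_comparisonDomain (x₀ c : E) (r : ℝ) : IsOpen (comparisonDomain x₀ c r) := by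
  refine isOpen_iff_mem_nhds.2 fun z ⟨hz, hzc, hzx₀⟩ => ?_
  filter_upwards [isOpen_ball.mem_nhds hz, isOpen_ne.mem_nhds hzc,
    (continuousAt_inversion hzc).eventually_ne hzx₀] with w hw hwc hwx₀
  exact ⟨hw, hwc, hwx₀⟩

lemma eventually_mem_comparisonDomain_radius (hz : z ∈ comparisonDomain x₀ c r) :
    ∀ᶠ s in 𝓝 r, z ∈ comparisonDomain x₀ c s := by
  filter_upwards [lt_mem_nhds (mem_ball.1 hz.1),
    (continuousAt_inversion_radius hz.2.1).eventually_ne hz.2.2] with s hs hzx₀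
  exact ⟨hs, hz.2.1, hzx₀⟩

omit [InnerProductSpace ℝ E] in
lemma ne_of_mem_closedBall (hr : r < dist x₀ c) (hz : z ∈ closedBall c r) : z ≠ x₀ := by
  rintro rfl
  exact hr.not_ge hz

omit [InnerProductSpace ℝ E] in
lemma exists_notMem_closedBall_lt (hsing : ∀ M, ∃ᶠ x in 𝓝 x₀, M < u x) (hrx : r < dist x₀ c)
    (M : ℝ) : ∃ x ≠ x₀, x ∉ closedBall c r ∧ M < u x := by
  obtain ⟨x, hx, hxr⟩ := ((hsing (max M (u x₀))).and_eventually
    (isClosed_closedBall.isOpen_compl.mem_nhds fun h => hrx.not_ge h)).exists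
  refine ⟨x, ?_, hxr, (le_max_left _ _).trans_lt hx⟩
  rintro rfl
  exact hx.not_ge (le_max_right _ _)

lemma le_kelvin_of_violationSet_eq_empty (hv : violationSet γ x₀ u c r = ∅)
    (hz : z ∈ comparisonDomain x₀ c r) : u z ≤ kelvin γ u c r z :=
  not_lt.1 fun hlt => (hv.subset ⟨hz, hlt⟩).elim

lemma sq_norm_sub_smul_of_norm_eq {a b : E} (h : ‖a‖ = ‖b‖) (t : ℝ) :
    ‖a - t • (b - a)‖ ^ 2 = ‖a‖ ^ 2 + t * (1 + t) * ‖b - a‖ ^ 2 := by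
  have hb : ‖a‖ ^ 2 = ‖a + (b - a)‖ ^ 2 := by rw [add_sub_cancel, h]
  rw [norm_add_sq_real] at hb
  rw [norm_sub_sq_real, norm_smul, mul_pow, Real.norm_eq_abs, sq_abs, inner_smul_right]
  linear_combination t * hb

lemma exists_inversion_eq_of_dist_eq (hne : x₁ ≠ x₂) (hdist : dist x₁ x₀ = dist x₂ x₀) {q : ℝ}
    (hq : 1 < q) : ∃ c, x₁ ≠ c ∧ q * dist x₁ c < dist x₀ c ∧
      inversion c (q * dist x₁ c) x₁ = x₂ := by
  have hq2 : 0 < q ^ 2 - 1 := by nlinarith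
  set t := (q ^ 2 - 1)⁻¹
  have ht : t * (q ^ 2 - 1) = 1 := inv_mul_cancel₀ hq2.ne'
  set c := x₁ - t • (x₂ - x₁) with hc
  have hsub : x₁ - c = t • (x₂ - x₁) := sub_sub_cancel _ _
  have hsub₂ : x₂ - c = q ^ 2 • (x₁ - c) := by
    have ht' : q ^ 2 * t = 1 + t := by linarith
    rw [← sub_add_sub_cancel x₂ x₁ c, hsub, smul_smul, ht', add_smul, one_smul]
  have hx₁c : x₁ ≠ c := sub_ne_zero.1 (hsub ▸ smul_ne_zero (by positivity) (sub_ne_zero.2 hne.symm))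
  have hx₁c' := dist_pos.2 hx₁c
  have hx₁x₀ : 0 < dist x₁ x₀ := dist_pos.2 fun h =>
    hne (h.trans (dist_eq_zero.1 (hdist.symm.trans (dist_eq_zero.2 h))).symm)
  refine ⟨c, hx₁c, ?_, ?_⟩
  · have hpyth : dist x₀ c ^ 2 = dist x₁ x₀ ^ 2 + (q * dist x₁ c) ^ 2 := by
      have hc₀ : dist x₀ c = ‖(x₁ - x₀) - t • ((x₂ - x₀) - (x₁ - x₀))‖ := by
        rw [dist_comm, dist_eq_norm, hc, sub_sub_sub_cancel_right, sub_right_comm]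
      rw [dist_eq_norm, dist_eq_norm] at hdist
      rw [hc₀, sq_norm_sub_smul_of_norm_eq hdist, sub_sub_sub_cancel_right, dist_eq_norm,
        dist_eq_norm, hsub, norm_smul, Real.norm_of_nonneg (by positivity)]
      linear_combination -t * ‖x₂ - x₁‖ ^ 2 * ht
    exact lt_of_pow_lt_pow_left₀ 2 dist_nonneg (by rw [hpyth]; linarith [pow_pos hx₁x₀ 2])
  · rw [inversion, mul_div_cancel_right₀ _ hx₁c'.ne', vsub_eq_sub, vadd_eq_add, ← hsub₂,
      sub_add_cancel]

variable [FiniteDimensional ℝ E] [MeasurableSpace E] [BorelSpace E] {μ : Measure E}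

lemma measurableSet_violationSet (γ : ℝ) (hu : Measurable u) (x₀ c : E) (r : ℝ) :
    MeasurableSet (violationSet γ x₀ u c r) :=
  (isOpen_comparisonDomain x₀ c r).measurableSet.inter
    (measurableSet_lt (measurable_kelvin γ hu c r) hu)

omit [FiniteDimensional ℝ E] [BorelSpace E] in
lemma ae_mem_comparisonDomain [NullSingletonClass μ] (x₀ c : E) (hr : 0 < r) :
    ∀ᵐ z ∂μ, z ∈ ball c r → z ∈ comparisonDomain x₀ c r := by
  filter_upwards [Measure.ae_ne μ c, Measure.ae_ne μ (inversion c r x₀)] with z hzc hzx₀ hz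
  refine ⟨hz, hzc, ?_⟩
  rintro rfl
  exact hzx₀ (inversion_inversion c hr.ne' z).symm

namespace IsPuncturedSolution

omit [InnerProductSpace ℝ E] [FiniteDimensional ℝ E] [BorelSpace E] in
lemma continuousAt (hu : IsPuncturedSolution μ γ p x₀ u) (hz : z ≠ x₀) : ContinuousAt u z :=
  hu.continuousOn.continuousAt (isOpen_ne.mem_nhds hz)

omit [InnerProductSpace ℝ E] [FiniteDimensional ℝ E] in
lemma measurable (hu : IsPuncturedSolution μ γ p x₀ u) : Measurable u :=
  measurable_of_continuousOn_compl_singleton x₀ hu.continuousOn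

omit [InnerProductSpace ℝ E] [FiniteDimensional ℝ E] [BorelSpace E] in
lemma integrable (hu : IsPuncturedSolution μ γ p x₀ u) (hz : z ≠ x₀) :
    Integrable (fun y => dist z y ^ (-γ) * u y ^ p) μ := by
  by_contra hint
  exact (hu.pos z).ne' ((hu.eq_rieszPotential z hz).trans (integral_undef hint))

omit [InnerProductSpace ℝ E] [FiniteDimensional ℝ E] [BorelSpace E] in
lemma continuousOn_closedBall (hu : IsPuncturedSolution μ γ p x₀ u) (hr : r < dist x₀ c) :
    ContinuousOn u (closedBall c r) :=
  hu.continuousOn.mono fun _ => ne_of_mem_closedBall hr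

omit [FiniteDimensional ℝ E] [BorelSpace E] in
lemma rpow_le_kelvin_rpow (hu : IsPuncturedSolution μ γ p x₀ u) (hp0 : 0 ≤ p)
    (hp : γ * p ≤ 2 * finrank ℝ E - γ) (hle : u z ≤ kelvin γ u c r z) (hz : z ∈ ball c r)
    (hzc : z ≠ c) : u z ^ p ≤ kelvin (2 * finrank ℝ E - γ) (fun w => u w ^ p) c r z :=
  (Real.rpow_le_rpow (hu.pos z).le hle hp0).trans
    (kelvin_rpow_le (fun x => (hu.pos x).le) hp hz hzc)

omit [BorelSpace E] in
lemma exists_forall_le (hu : IsPuncturedSolution μ γ p x₀ u) (hR : R < dist x₀ c) :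
    ∃ M, ∀ z ∈ closedBall c R, u z ≤ M := by
  obtain ⟨M, hM⟩ := (isCompact_closedBall c R).exists_bound_of_continuousOn
    (hu.continuousOn_closedBall hR)
  exact ⟨M, fun z hz => (Real.le_norm_self _).trans (hM z hz)⟩

lemma exists_forall_le_kelvin [μ.IsAddHaarMeasure] [Nontrivial E]
    (hu : IsPuncturedSolution μ γ p x₀ u) (hγ : 0 ≤ γ)
    (hR0 : 0 < R) (hR : R < dist x₀ c) :
    ∃ k > 0, ∀ r, 0 < r → r ≤ R → ∀ z ∈ comparisonDomain x₀ c r, k ≤ kelvin γ u c r z := by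
  obtain ⟨z₀, -, hmin⟩ := (isCompact_closedBall c R).exists_isMinOn
    ⟨c, mem_closedBall_self hR0.le⟩ ((hu.continuousOn_closedBall hR).rpow_const (p := p)
      fun z _ => Or.inl (hu.pos z).ne')
  have hm : 0 < u z₀ ^ p := Real.rpow_pos_of_pos (hu.pos z₀) p
  have hball : 0 < μ.real (ball c R) :=
    ENNReal.toReal_pos (measure_ball_pos μ c hR0).ne' measure_ball_lt_top.ne
  refine ⟨μ.real (ball c R) * u z₀ ^ p * (2 * R) ^ (-γ), by positivity,
    fun r hr hrR z ⟨hz, hzc, hzx₀⟩ => ?_⟩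
  refine mul_rpow_neg_le_kelvin hγ (by positivity) ?_ hr hrR hz hzc
  rw [hu.eq_rieszPotential _ hzx₀]
  exact mul_rpow_neg_le_rieszPotential hγ (fun z => Real.rpow_nonneg (hu.pos z).le p)
    (hu.integrable hzx₀) (fun z hz => hmin (ball_subset_closedBall hz)) hR0.le

omit [FiniteDimensional ℝ E] [BorelSpace E] in
lemma continuousAt_kelvin (hu : IsPuncturedSolution μ γ p x₀ u) (hr : 0 < r)
    (hz : z ∈ comparisonDomain x₀ c r) : ContinuousAt (kelvin γ u c r) z :=
  _root_.continuousAt_kelvin hr hz.2.1 (hu.continuousAt hz.2.2)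

omit [FiniteDimensional ℝ E] [BorelSpace E] in
lemma continuousAt_kelvin_radius (hu : IsPuncturedSolution μ γ p x₀ u) (hr : 0 < r)
    (hz : z ∈ comparisonDomain x₀ c r) : ContinuousAt (fun s => kelvin γ u c s z) r :=
  _root_.continuousAt_kelvin_radius hr hz.2.1 (hu.continuousAt hz.2.2)

omit [BorelSpace E] in
lemma exists_lt_kelvin (hu : IsPuncturedSolution μ γ p x₀ u) (hγ : 0 ≤ γ)
    (hsing : ∀ M, ∃ᶠ x in 𝓝 x₀, M < u x) (hr : 0 < r) (hrx : r < dist x₀ c) :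
    ∃ z ∈ comparisonDomain x₀ c r, u z < kelvin γ u c r z := by
  obtain ⟨M, hM⟩ := hu.exists_forall_le hrx
  obtain ⟨x, hxx₀, hxr, hxM⟩ := exists_notMem_closedBall_lt hsing hrx M
  obtain ⟨z, ⟨hz, hzc⟩, rfl⟩ := (image_inversion_ball_diff_center c hr).superset hxr
  refine ⟨z, ⟨hz, hzc, hxx₀⟩, (hM z (ball_subset_closedBall hz)).trans_lt (hxM.trans_le ?_)⟩
  have hone : 1 ≤ r / dist z c := (one_le_div (dist_pos.2 hzc)).2 (mem_ball.1 hz).le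
  exact le_mul_of_one_le_left (hu.pos _).le (Real.one_le_rpow hone hγ)

variable [μ.IsAddHaarMeasure] [Nontrivial E]

lemma integrableOn_kernelDiff_mul (hu : IsPuncturedSolution μ γ p x₀ u) (hr : 0 < r)
    (hrx : r < dist x₀ c) (hy : y ∈ comparisonDomain x₀ c r) :
    IntegrableOn (fun z => kernelDiff γ c r y z *
      (u z ^ p - kelvin (2 * finrank ℝ E - γ) (fun w => u w ^ p) c r z)) (ball c r) μ :=
  integrableOn_ball_kernelDiff_mul_sub_kelvin μ
    (hu.integrable (ne_of_mem_closedBall hrx (ball_subset_closedBall hy.1)))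
    (hu.integrable hy.2.2) hr hy.2.1

lemma sub_kelvin_eq (hu : IsPuncturedSolution μ γ p x₀ u) (hr : 0 < r)
    (hrx : r < dist x₀ c) (hy : y ∈ comparisonDomain x₀ c r) :
    u y - kelvin γ u c r y = ∫ z in ball c r, kernelDiff γ c r y z *
      (u z ^ p - kelvin (2 * finrank ℝ E - γ) (fun w => u w ^ p) c r z) ∂μ := by
  have hyx₀ : y ≠ x₀ := ne_of_mem_closedBall hrx (ball_subset_closedBall hy.1)
  rw [← rieszPotential_sub_kelvin μ (hu.integrable hyx₀) (hu.integrable hy.2.2) hr hy.2.1,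
    hu.eq_rieszPotential y hyx₀, kelvin, hu.eq_rieszPotential _ hy.2.2]
  rfl

lemma sub_kelvin_le (hu : IsPuncturedSolution μ γ p x₀ u) (hγ : 0 < γ) (hp0 : 0 ≤ p)
    (hp : γ * p ≤ 2 * finrank ℝ E - γ) (hr : 0 < r) (hrx : r < dist x₀ c)
    (hy : y ∈ comparisonDomain x₀ c r) {B : ℝ}
    (hB : ∀ z ∈ violationSet γ x₀ u c r, u z ^ p - kelvin γ u c r z ^ p ≤ B)
    (hint : IntegrableOn (fun z => dist y z ^ (-γ)) (violationSet γ x₀ u c r) μ) :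
    u y - kelvin γ u c r y ≤ (∫ z in violationSet γ x₀ u c r, dist y z ^ (-γ) ∂μ) * B := by
  set N := violationSet γ x₀ u c r
  have hN : MeasurableSet N := measurableSet_violationSet γ hu.measurable x₀ c r
  have hNball : N ⊆ ball c r := fun z hz => hz.1.1
  have hpointwise : ∀ᵐ z ∂μ, z ∈ ball c r → kernelDiff γ c r y z *
      (u z ^ p - kelvin (2 * finrank ℝ E - γ) (fun w => u w ^ p) c r z) ≤
        N.indicator (fun z => dist y z ^ (-γ) * B) z := by
    filter_upwards [ae_mem_comparisonDomain x₀ c hr, Measure.ae_ne μ y] with z hdom hzy hzr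
    have hz := hdom hzr
    have hK := kernelDiff_pos hγ hr hy.1 hy.2.1 hzr hzy
    by_cases hzN : z ∈ N
    · have hkelvin := kelvin_rpow_le (fun x => (hu.pos x).le) hp hzr hz.2.1
      have hB0 : 0 ≤ B := (sub_nonneg.2 (Real.rpow_le_rpow
        (kelvin_pos hu.pos hr hz.2.1).le hzN.2.le hp0)).trans (hB z hzN)
      rw [indicator_of_mem hzN]
      exact mul_le_mul_of_nonneg (kernelDiff_le hr.le y z) (by linarith [hB z hzN]) hK.le hB0
    · rw [indicator_of_notMem hzN]
      have hle : u z ≤ kelvin γ u c r z := not_lt.1 fun hlt => hzN ⟨hz, hlt⟩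
      exact mul_nonpos_of_nonneg_of_nonpos hK.le
        (sub_nonpos.2 (hu.rpow_le_kelvin_rpow hp0 hp hle hzr hz.2.1))
  calc u y - kelvin γ u c r y
      = ∫ z in ball c r, kernelDiff γ c r y z *
          (u z ^ p - kelvin (2 * finrank ℝ E - γ) (fun w => u w ^ p) c r z) ∂μ :=
        hu.sub_kelvin_eq hr hrx hy
    _ ≤ ∫ z in ball c r, N.indicator (fun z => dist y z ^ (-γ) * B) z ∂μ :=
        setIntegral_mono_on_ae (hu.integrableOn_kernelDiff_mul hr hrx hy)
          ((integrable_indicator_iff hN).2 (hint.mul_const B)).integrableOn measurableSet_ball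
          hpointwise
    _ = (∫ z in N, dist y z ^ (-γ) ∂μ) * B := by
        rw [setIntegral_indicator hN, inter_eq_self_of_subset_right hNball, integral_mul_const]

lemma violationSet_eq_empty_of_measure_lt (hu : IsPuncturedSolution μ γ p x₀ u) (hγ : 0 < γ)
    (hγd : γ < finrank ℝ E) (hp0 : 0 ≤ p) (hp : γ * p ≤ 2 * finrank ℝ E - γ) (hR0 : 0 < R)
    (hR : R < dist x₀ c) :
    ∃ δ > 0, ∀ r, 0 < r → r ≤ R → μ (violationSet γ x₀ u c r) < δ →
      violationSet γ x₀ u c r = ∅ := by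
  obtain ⟨M, hM⟩ := hu.exists_forall_le hR
  obtain ⟨k, hk, hkelvin⟩ := hu.exists_forall_le_kelvin hγ.le hR0 hR
  obtain ⟨C, hC, hlip⟩ := exists_forall_rpow_sub_rpow_le p hk M
  obtain ⟨δ, hδ, hsmall⟩ := exists_pos_forall_integrableOn_and_setIntegral_dist_rpow_neg_le μ
    hγ.le hγd (ε := 1 / (2 * C)) (by positivity)
  refine ⟨δ, hδ, fun r hr hrR hμ => not_nonempty_iff_eq_empty.1 fun ⟨y₀, hy₀⟩ => ?_⟩
  set N := violationSet γ x₀ u c r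
  have huM : ∀ z ∈ N, u z ≤ M := fun z hz =>
    hM z (closedBall_subset_closedBall hrR (ball_subset_closedBall hz.1.1))
  have hbdd : BddAbove ((fun z => u z - kelvin γ u c r z) '' N) := by
    refine ⟨M, ?_⟩
    rintro _ ⟨z, hz, rfl⟩
    linarith [huM z hz, kelvin_pos (γ := γ) hu.pos hr hz.1.2.1]
  set m := sSup ((fun z => u z - kelvin γ u c r z) '' N)
  have hlem : ∀ z ∈ N, u z - kelvin γ u c r z ≤ m := fun z hz =>
    le_csSup hbdd (mem_image_of_mem _ hz)
  have hm : 0 < m := (sub_pos.2 hy₀.2).trans_le (hlem y₀ hy₀)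
  have hhalf : ∀ y ∈ N, u y - kelvin γ u c r y ≤ m / 2 := by
    intro y hy
    obtain ⟨hint, hle⟩ := hsmall N hμ y
    have hlipN : ∀ z ∈ N, u z ^ p - kelvin γ u c r z ^ p ≤ C * m := fun z hz =>
      (hlip _ _ (hkelvin r hr hrR z hz.1) hz.2.le (huM z hz)).trans
        (mul_le_mul_of_nonneg_left (hlem z hz) hC.le)
    calc u y - kelvin γ u c r y ≤ (∫ z in N, dist y z ^ (-γ) ∂μ) * (C * m) :=
          hu.sub_kelvin_le hγ hp0 hp hr (hrR.trans_lt hR) hy.1 hlipN hint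
      _ ≤ 1 / (2 * C) * (C * m) := by gcongr
      _ = m / 2 := by field_simp
  have hmhalf : m ≤ m / 2 := csSup_le ⟨_, mem_image_of_mem _ hy₀⟩ (forall_mem_image.2 hhalf)
  linarith

lemma lt_kelvin_of_violationSet_eq_empty (hu : IsPuncturedSolution μ γ p x₀ u) (hγ : 0 < γ)
    (hp0 : 0 < p) (hp : γ * p ≤ 2 * finrank ℝ E - γ)
    (hsing : ∀ M, ∃ᶠ x in 𝓝 x₀, M < u x) (hr : 0 < r) (hrx : r < dist x₀ c)
    (hv : violationSet γ x₀ u c r = ∅) (hy : y ∈ comparisonDomain x₀ c r) :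
    u y < kelvin γ u c r y := by
  set g := fun z => kernelDiff γ c r y z *
    (kelvin (2 * finrank ℝ E - γ) (fun w => u w ^ p) c r z - u z ^ p) with hg
  have hdiff : kelvin γ u c r y - u y = ∫ z in ball c r, g z ∂μ := by
    rw [← neg_sub, hu.sub_kelvin_eq hr hrx hy, ← integral_neg]
    exact integral_congr_ae (.of_forall fun z => by simp only [hg]; ring)
  have hgint : IntegrableOn g (ball c r) μ :=
    (hu.integrableOn_kernelDiff_mul hr hrx hy).neg.congr
      (.of_forall fun z => by simp only [hg, Pi.neg_apply]; ring)
  have hgnonneg : 0 ≤ᵐ[μ.restrict (ball c r)] g := by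
    rw [EventuallyLE, ae_restrict_iff' measurableSet_ball]
    filter_upwards [ae_mem_comparisonDomain x₀ c hr, Measure.ae_ne μ y] with z hdom hzy hz
    exact mul_nonneg (kernelDiff_pos hγ hr hy.1 hy.2.1 hz hzy).le (sub_nonneg.2
      (hu.rpow_le_kelvin_rpow hp0.le hp (le_kelvin_of_violationSet_eq_empty hv (hdom hz)) hz
        (hdom hz).2.1))
  set A := {z ∈ comparisonDomain x₀ c r | u z < kelvin γ u c r z}
  have hAopen : IsOpen A := isOpen_iff_mem_nhds.2 fun z ⟨hz, hlt⟩ =>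
    ((isOpen_comparisonDomain x₀ c r).eventually_mem hz).and
      ((hu.continuousAt (ne_of_mem_closedBall hrx (ball_subset_closedBall hz.1))).eventually_lt
        (hu.continuousAt_kelvin hr hz) hlt)
  have hA : 0 < μ (A \ {y}) := by
    rw [measure_sdiff_null (measure_singleton y)]
    exact hAopen.measure_pos μ (hu.exists_lt_kelvin hγ.le hsing hr hrx)
  have hsupp : A \ {y} ⊆ Function.support g ∩ ball c r := by
    rintro z ⟨⟨hz, hlt⟩, hzy⟩
    have hpow := Real.rpow_lt_rpow (hu.pos z).le hlt hp0
    exact ⟨(mul_pos (kernelDiff_pos hγ hr hy.1 hy.2.1 hz.1 hzy) (sub_pos.2 (hpow.trans_le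
      (kelvin_rpow_le (fun x => (hu.pos x).le) hp hz.1 hz.2.1)))).ne', hz.1⟩
  rw [← sub_pos, hdiff, setIntegral_pos_iff_support_of_nonneg_ae hgnonneg hgint]
  exact hA.trans_le (measure_mono hsupp)

lemma eventually_violationSet_eq_empty (hu : IsPuncturedSolution μ γ p x₀ u) (hγ : 0 < γ)
    (hγd : γ < finrank ℝ E) (hp0 : 0 ≤ p) (hp : γ * p ≤ 2 * finrank ℝ E - γ) (hr : 0 ≤ r)
    (hrx : r < dist x₀ c)
    (hae : ∀ᵐ z ∂μ, ∀ᶠ s in 𝓝[>] r, z ∉ violationSet γ x₀ u c s) :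
    ∀ᶠ s in 𝓝[>] r, violationSet γ x₀ u c s = ∅ := by
  obtain ⟨R, hrR, hRx⟩ := exists_between hrx
  obtain ⟨δ, hδ, hempty⟩ := hu.violationSet_eq_empty_of_measure_lt hγ hγd hp0 hp
    (hr.trans_lt hrR) hRx
  have hIoc : ∀ᶠ s in 𝓝[>] r, s ∈ Ioc r R := Ioc_mem_nhdsGT hrR
  have htendsto := tendsto_measure_of_ae_tendsto_indicator (𝓝[>] r) MeasurableSet.empty
    (fun s => measurableSet_violationSet γ hu.measurable x₀ c s) measurableSet_ball
    (measure_ball_lt_top (μ := μ) (x := c) (r := R)).ne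
    (hIoc.mono fun s hs z hz => ball_subset_ball hs.2 hz.1.1)
    (hae.mono fun z hz => hz.mono fun s hs => iff_of_false hs (notMem_empty z))
  rw [measure_empty] at htendsto
  filter_upwards [hIoc, htendsto.eventually_lt_const hδ] with s hs hlt
  exact hempty s (hr.trans_lt hs.1) hs.2 hlt

lemma eventually_violationSet_eq_empty_zero (hu : IsPuncturedSolution μ γ p x₀ u) (hγ : 0 < γ)
    (hγd : γ < finrank ℝ E) (hp0 : 0 ≤ p) (hp : γ * p ≤ 2 * finrank ℝ E - γ) (hc : c ≠ x₀) :
    ∀ᶠ s in 𝓝[>] 0, violationSet γ x₀ u c s = ∅ := by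
  refine hu.eventually_violationSet_eq_empty hγ hγd hp0 hp le_rfl (dist_pos.2 hc.symm) ?_
  filter_upwards [Measure.ae_ne μ c] with z hz
  filter_upwards [Ioo_mem_nhdsGT (dist_pos.2 hz)] with s hs hmem
  exact hs.2.not_gt hmem.1.1

lemma eventually_violationSet_eq_empty_of_eq_empty (hu : IsPuncturedSolution μ γ p x₀ u)
    (hγ : 0 < γ) (hγd : γ < finrank ℝ E) (hp0 : 0 < p) (hp : γ * p ≤ 2 * finrank ℝ E - γ)
    (hsing : ∀ M, ∃ᶠ x in 𝓝 x₀, M < u x) (hr : 0 < r) (hrx : r < dist x₀ c)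
    (hv : violationSet γ x₀ u c r = ∅) :
    ∀ᶠ s in 𝓝[>] r, violationSet γ x₀ u c s = ∅ := by
  refine hu.eventually_violationSet_eq_empty hγ hγd hp0.le hp hr.le hrx ?_
  have hsphere : ∀ᵐ z ∂μ, z ∉ sphere c r :=
    measure_eq_zero_iff_ae_notMem.1 (Measure.addHaar_sphere μ c r)
  filter_upwards [hsphere, ae_mem_comparisonDomain x₀ c hr] with z hzr hdom
  rcases lt_or_gt_of_ne hzr with hlt | hgt
  · have hz := hdom hlt
    have hstrict := hu.lt_kelvin_of_violationSet_eq_empty hγ hp0 hp hsing hr hrx hv hz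
    have hnear := (hu.continuousAt_kelvin_radius hr hz).eventually (lt_mem_nhds hstrict)
    exact (hnear.filter_mono nhdsWithin_le_nhds).mono fun s hs hmem => hs.not_gt hmem.2
  · filter_upwards [Ioo_mem_nhdsGT hgt] with s hs hmem
    exact hs.2.not_gt hmem.1.1

omit [FiniteDimensional ℝ E] [BorelSpace E] [μ.IsAddHaarMeasure] [Nontrivial E] in
lemma isClosed_violationSet_eq_empty_inter_Icc (hu : IsPuncturedSolution μ γ p x₀ u) {a b : ℝ}
    (ha : 0 < a) : IsClosed ({s | violationSet γ x₀ u c s = ∅} ∩ Icc a b) := by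
  refine isClosed_of_closure_subset fun s hs => ?_
  have hsab : s ∈ Icc a b := isClosed_Icc.closure_subset_iff.2 inter_subset_right hs
  refine ⟨not_nonempty_iff_eq_empty.1 fun ⟨z, hz, hlt⟩ => ?_, hsab⟩
  have hnear : ∀ᶠ t in 𝓝 s, z ∈ violationSet γ x₀ u c t :=
    (eventually_mem_comparisonDomain_radius hz).and
      ((hu.continuousAt_kelvin_radius (ha.trans_le hsab.1) hz).eventually (gt_mem_nhds hlt))
  obtain ⟨t, ⟨ht, -⟩, hzt⟩ := ((mem_closure_iff_frequently.1 hs).and_eventually hnear).exists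
  exact (ht.subset hzt).elim

lemma violationSet_eq_empty (hu : IsPuncturedSolution μ γ p x₀ u)
    (hγ : 0 < γ) (hγd : γ < finrank ℝ E) (hp0 : 0 < p) (hp : γ * p ≤ 2 * finrank ℝ E - γ)
    (hsing : ∀ M, ∃ᶠ x in 𝓝 x₀, M < u x) (hr : 0 < r) (hrx : r < dist x₀ c) :
    violationSet γ x₀ u c r = ∅ := by
  have hc : c ≠ x₀ := (dist_pos.1 (hr.trans hrx)).symm
  obtain ⟨a, ha, ha0, har⟩ := ((hu.eventually_violationSet_eq_empty_zero hγ hγd hp0.le hp hc).and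
    (Ioc_mem_nhdsGT hr)).exists
  refine (hu.isClosed_violationSet_eq_empty_inter_Icc ha0).Icc_subset_of_forall_mem_nhdsWithin
    ha (fun s ⟨hs, has, hsr⟩ => ?_) ⟨har, le_rfl⟩
  exact hu.eventually_violationSet_eq_empty_of_eq_empty hγ hγd hp0 hp hsing (ha0.trans_le has)
    (hsr.trans hrx) hs

lemma le_rpow_mul_of_dist_eq (hu : IsPuncturedSolution μ γ p x₀ u)
    (hγ : 0 < γ) (hγd : γ < finrank ℝ E) (hp0 : 0 < p) (hp : γ * p ≤ 2 * finrank ℝ E - γ)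
    (hsing : ∀ M, ∃ᶠ x in 𝓝 x₀, M < u x) (hne : x₁ ≠ x₂) (hdist : dist x₁ x₀ = dist x₂ x₀)
    {q : ℝ} (hq : 1 < q) : u x₁ ≤ q ^ γ * u x₂ := by
  obtain ⟨c, hx₁c, hrx, rfl⟩ := exists_inversion_eq_of_dist_eq hne hdist hq
  have hx₁c' := dist_pos.2 hx₁c
  have hx₂x₀ : inversion c (q * dist x₁ c) x₁ ≠ x₀ := fun h => hne <| by
    rw [dist_eq_zero.2 h, dist_eq_zero] at hdist
    rw [h, hdist]
  have hle := le_kelvin_of_violationSet_eq_empty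
    (hu.violationSet_eq_empty hγ hγd hp0 hp hsing (by positivity) hrx)
    ⟨lt_mul_of_one_lt_left hx₁c' hq, hx₁c, hx₂x₀⟩
  rwa [kelvin, mul_div_cancel_right₀ _ hx₁c'.ne'] at hle

lemma le_of_dist_eq (hu : IsPuncturedSolution μ γ p x₀ u)
    (hγ : 0 < γ) (hγd : γ < finrank ℝ E) (hp0 : 0 < p) (hp : γ * p ≤ 2 * finrank ℝ E - γ)
    (hsing : ∀ M, ∃ᶠ x in 𝓝 x₀, M < u x) (hdist : dist x₁ x₀ = dist x₂ x₀) : u x₁ ≤ u x₂ := by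
  rcases eq_or_ne x₁ x₂ with rfl | hne
  · rfl
  have hlim : Tendsto (fun q : ℝ => q ^ γ * u x₂) (𝓝[>] 1) (𝓝 (1 ^ γ * u x₂)) :=
    ((Real.continuousAt_rpow_const 1 γ (Or.inr hγ.le)).mul_const _).mono_left nhdsWithin_le_nhds
  rw [Real.one_rpow, one_mul] at hlim
  exact ge_of_tendsto hlim (eventually_nhdsWithin_of_forall fun q hq =>
    hu.le_rpow_mul_of_dist_eq hγ hγd hp0 hp hsing hne hdist hq)

lemma exists_measureReal_ball_le (hu : IsPuncturedSolution μ γ p x₀ u) (hγ : 0 ≤ γ)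
    (hγd : γ < finrank ℝ E) (hp : p ≤ 0) (ha : a ≠ x₀) :
    ∃ C, ∀ R > 0, μ.real (ball a R) ≤ C * R ^ γ := by
  obtain ⟨C, hC, havg⟩ := exists_setLIntegral_ball_rieszPotential_le μ hγ hγd
  have hua := hu.pos a
  have hf : ∀ z, 0 ≤ u z ^ p := fun z => Real.rpow_nonneg (hu.pos z).le p
  set M := 2 * C * u a
  refine ⟨2 * ((M ^ p)⁻¹ * u a), fun R hR => ?_⟩
  have hu_avg : ∫⁻ x in ball a R, ENNReal.ofReal (u x) ∂μ ≤
      ENNReal.ofReal (C * μ.real (ball a R) * u a) := by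
    rw [hu.eq_rieszPotential a ha, setLIntegral_congr_fun_ae measurableSet_ball
      ((Measure.ae_ne μ x₀).mono fun x hx _ => by rw [hu.eq_rieszPotential x hx])]
    exact havg _ (hu.measurable.pow_const p) hf a (hu.integrable ha) R hR
  have hpow_avg : ∫⁻ x in ball a R, ENNReal.ofReal (u x ^ p) ∂μ ≤
      ENNReal.ofReal (R ^ γ * u a) := by
    rw [hu.eq_rieszPotential a ha]
    exact setLIntegral_ball_ofReal_le_rieszPotential hγ hf (hu.integrable ha) hR
  have hmeasure : μ (ball a R) ≤
      ENNReal.ofReal (M⁻¹ * (C * μ.real (ball a R) * u a) + (M ^ p)⁻¹ * (R ^ γ * u a)) :=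
    calc μ (ball a R) ≤ ENNReal.ofReal M⁻¹ * ∫⁻ x in ball a R, ENNReal.ofReal (u x) ∂μ +
          ENNReal.ofReal (M ^ p)⁻¹ * ∫⁻ x in ball a R, ENNReal.ofReal (u x ^ p) ∂μ :=
        measure_le_lintegral_add_lintegral_rpow μ hu.measurable hu.pos hp (by positivity) _
      _ ≤ ENNReal.ofReal M⁻¹ * ENNReal.ofReal (C * μ.real (ball a R) * u a) +
            ENNReal.ofReal (M ^ p)⁻¹ * ENNReal.ofReal (R ^ γ * u a) := by gcongr
      _ = ENNReal.ofReal
            (M⁻¹ * (C * μ.real (ball a R) * u a) + (M ^ p)⁻¹ * (R ^ γ * u a)) := by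
          rw [← ENNReal.ofReal_mul (by positivity), ← ENNReal.ofReal_mul (by positivity),
            ← ENNReal.ofReal_add (by positivity) (by positivity)]
  have hhalf : M⁻¹ * (C * μ.real (ball a R) * u a) = μ.real (ball a R) / 2 := by
    simp only [M]
    field_simp
  have hreal := ENNReal.toReal_le_of_le_ofReal (by positivity) hmeasure
  rw [← measureReal_def] at hreal
  linarith

lemma exponent_pos (hu : IsPuncturedSolution μ γ p x₀ u) (hγ : 0 ≤ γ)
    (hγd : γ < finrank ℝ E) : 0 < p := by
  by_contra! hp
  obtain ⟨a, ha⟩ := exists_ne x₀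
  obtain ⟨C, hC⟩ := hu.exists_measureReal_ball_le hγ hγd hp ha
  set ω := μ.real (ball (0 : E) 1)
  have hω : 0 < ω :=
    ENNReal.toReal_pos (measure_ball_pos μ _ zero_lt_one).ne' measure_ball_lt_top.ne
  have hlim : Tendsto (fun R : ℝ => R ^ (finrank ℝ E - γ) * ω) atTop atTop :=
    (tendsto_rpow_atTop (sub_pos.2 hγd)).atTop_mul_const hω
  obtain ⟨R, hCR, hR⟩ := ((hlim.eventually_gt_atTop C).and (eventually_gt_atTop 0)).exists
  refine hCR.not_ge ?_
  rw [Real.rpow_sub hR, Real.rpow_natCast, div_mul_eq_mul_div, div_le_iff₀ (by positivity)]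
  rw [← Measure.addHaar_real_closedBall μ a hR.le,
    Measure.addHaar_real_closedBall_eq_addHaar_real_ball]
  exact hC R hR

end IsPuncturedSolution

end MovingSpheres

theorem radial_symmetry_of_singular_solution_general {E : Type*} [NormedAddCommGroup E]
    [InnerProductSpace ℝ E] [FiniteDimensional ℝ E] [MeasurableSpace E] [BorelSpace E]
    (μ : Measure E) [μ.IsAddHaarMeasure] (α p : ℝ) (hα0 : 0 < α) (hαn : α < finrank ℝ E)
    (hp : p ≤ (finrank ℝ E + α) / (finrank ℝ E - α)) (x0 : E) (u : E → ℝ)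
    (hpos : ∀ x, 0 < u x) (hcont : ContinuousOn u {x0}ᶜ)
    (hsing : ∀ ε > (0 : ℝ), ∀ M : ℝ, ∃ x ∈ ball x0 ε, M < u x)
    (heq : ∀ x ≠ x0, u x = ∫ y, ‖x - y‖ ^ (-((finrank ℝ E : ℝ) - α)) * u y ^ p ∂μ) :
    ∀ x₁ x₂, ‖x₁ - x0‖ = ‖x₂ - x0‖ → u x₁ = u x₂ := by
  have : Nontrivial E := nontrivial_of_finrank_pos (R := ℝ) (by exact_mod_cast hα0.trans hαn)
  have hγ : 0 < finrank ℝ E - α := sub_pos.2 hαn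
  have hγd : finrank ℝ E - α < finrank ℝ E := sub_lt_self _ hα0
  have hu : IsPuncturedSolution μ (finrank ℝ E - α) p x0 u :=
    ⟨hpos, hcont, by simpa only [rieszPotential, dist_eq_norm] using heq⟩
  have hp' : (finrank ℝ E - α) * p ≤ 2 * finrank ℝ E - (finrank ℝ E - α) := by
    rw [le_div_iff₀ hγ] at hp
    linarith
  have hfreq : ∀ M, ∃ᶠ x in 𝓝 x0, M < u x := fun M =>
    nhds_basis_ball.frequently_iff.2 fun ε hε => hsing ε hε M
  have hle := fun x₁ x₂ => hu.le_of_dist_eq (x₁ := x₁) (x₂ := x₂) hγ hγd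
    (hu.exponent_pos hγ.le hγd) hp' hfreq
  simp_rw [← dist_eq_norm]
  exact fun x₁ x₂ h => le_antisymm (hle x₁ x₂ h) (hle x₂ x₁ h.symm)

end SingularSolutions

/-- For `p ≤ (n+α)/(n-α)`, a solution of the integral equation with a single
singularity at `x⁰` is radially symmetric about `x⁰`. -/
theorem radial_symmetry_of_singular_solution
    (n : ℕ) (hn : 0 < n) (α p : ℝ) (hα0 : 0 < α) (hαn : α < n)
    (hp : p ≤ (n + α) / (n - α))
    (x0 : EuclideanSpace ℝ (Fin n)) (u : EuclideanSpace ℝ (Fin n) → ℝ)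
    (hpos : ∀ x, 0 < u x)
    (hcont : ContinuousOn u {x0}ᶜ)
    (hsing : ∀ ε > (0 : ℝ), ∀ M : ℝ, ∃ x ∈ Metric.ball x0 ε, M < u x)
    (heq : ∀ x ≠ x0, u x = ∫ y : EuclideanSpace ℝ (Fin n),
      ‖x - y‖ ^ (-((n : ℝ) - α)) * u y ^ p) :
    ∀ x₁ x₂, ‖x₁ - x0‖ = ‖x₂ - x0‖ → u x₁ = u x₂ := by
  simpa only [finrank_euclideanSpace_fin] using radial_symmetry_of_singular_solution_general
    (E := EuclideanSpace ℝ (Fin n)) volume α p hα0 (by simpa using hαn) (by simpa using hp)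
    x0 u hpos hcont hsing (by simpa using heq)
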